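/- Let A be a self-adjoint operator on a separable Hilbert space H. Then there exists a sequence P_n of finite rank orthogonal projections such that: (i) P_n → I strongly; (ii) Ran P_n ⊆ Dom A for all n; (iii) for every f ∈ Dom A, ‖P_n A P_n f − A f‖ → 0 as n → ∞. -/

import Mathlib

open scoped InnerProductSpace

section aux
variable {G H : Type*} [NormedAddCommGroup G] [InnerProductSpace ℂ G] [CompleteSpace G]
  [NormedAddCommGroup H] [InnerProductSpace ℂ H] [CompleteSpace H]

/-- Spectral subspaces of a bounded self-adjoint operator. -/
theorem aux_spec (S : G →L[ℂ] G) (hS : IsSelfAdjoint S) :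
    ∃ M : ℝ → Submodule ℂ G, (∀ l, IsClosed (M l : Set G)) ∧
      (∀ l m, l < m → M l ≤ M m) ∧ (∀ l, ∀ x ∈ M l, S x ∈ M l) ∧
      (∀ l, ∀ x ∈ M l, (⟪S x, x⟫_ℂ).re ≤ l * ‖x‖ ^ 2) ∧
      (∀ l, ∀ x ∈ (M l)ᗮ, l * ‖x‖ ^ 2 ≤ (⟪S x, x⟫_ℂ).re) := by
  set a : ℝ → G →L[ℂ] G := fun l => cfc (fun t : ℝ => max (t - l) 0) S with ha
  set b : ℝ → G →L[ℂ] G := fun l => cfc (fun t : ℝ => max (l - t) 0) S with hb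
  have ha0 : ∀ l, (a l).IsPositive := fun l => by
    rw [← ContinuousLinearMap.nonneg_iff_isPositive]
    exact cfc_nonneg (by intros; positivity)
  have hb0 : ∀ l, (b l).IsPositive := fun l => by
    rw [← ContinuousLinearMap.nonneg_iff_isPositive]
    exact cfc_nonneg (by intros; positivity)
  have hab : ∀ l, a l * b l = 0 := fun l => by
    rw [ha, hb]
    dsimp only
    rw [← cfc_mul _ _ S (by fun_prop) (by fun_prop)]
    have : (fun x : ℝ => max (x - l) 0 * max (l - x) 0) = fun _ => 0 := by
      funext x
      rcases le_total x l with h | h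
      · rw [max_eq_right (by linarith)]; simp
      · rw [max_eq_right (a := l - x) (by linarith)]; simp
    rw [this]; simp
  have hdec : ∀ l, S = algebraMap ℝ (G →L[ℂ] G) l + a l - b l := fun l => by
    rw [ha, hb]
    dsimp only
    rw [← cfc_const l S hS, ← cfc_add S _ _ (by fun_prop) (by fun_prop),
      ← cfc_sub _ _ S (by fun_prop) (by fun_prop)]
    conv_lhs => rw [← cfc_id ℝ S hS]
    congr 1
    funext x
    rcases le_total x l with h | h
    · rw [max_eq_right (by linarith), max_eq_left (by linarith)]; simp
    · rw [max_eq_right (a := l - x) (by linarith), max_eq_left (by linarith)]; simp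
  have hdec' : ∀ (l : ℝ) (x : G), S x = (l : ℂ) • x + a l x - b l x := fun l x => by
    conv_lhs => rw [hdec l]
    simp [Algebra.algebraMap_eq_smul_one]
  have habx : ∀ l x, a l (b l x) = 0 := fun l x => by
    have := congrArg (fun T : G →L[ℂ] G => T x) (hab l)
    simpa using this
  have hre : ∀ (l : ℝ) (x : G), (⟪(l : ℂ) • x, x⟫_ℂ).re = l * ‖x‖ ^ 2 := fun l x => by
    rw [inner_smul_left, inner_self_eq_norm_sq_to_K]
    simp [← Complex.ofReal_pow]
  refine ⟨fun l => LinearMap.ker (a l : G →ₗ[ℂ] G), ?_, ?_, ?_, ?_, ?_⟩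
  · intro l
    exact (a l).isClosed_ker
  · intro l m hlm x hx
    have : a m = cfc (fun t : ℝ => max (t - m) 0 / max (t - l) (m - l)) S * a l := by
      rw [ha]
      dsimp only
      have hpos : ∀ t : ℝ, max (t - l) (m - l) ≠ 0 := fun t =>
        ne_of_gt (lt_max_of_lt_right (by linarith))
      rw [← cfc_mul _ _ S (Continuous.continuousOn (by fun_prop (disch := exact hpos _))) (by fun_prop)]
      congr 1
      funext t
      rcases le_total t m with h | h
      · rw [max_eq_right (by linarith)]; simp
      · rw [max_eq_left (b := m - l) (by linarith), max_eq_left (a := t - l) (b := 0) (by linarith)]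
        have : t - l ≠ 0 := by linarith
        field_simp
    have hx' : a l x = 0 := hx
    change a m x = 0
    rw [this]
    simp [hx']
  · intro l x hx
    have hx' : a l x = 0 := hx
    change a l (S x) = 0
    rw [hdec' l x]
    simp [hx', habx]
  · intro l x hx
    have hx' : a l x = 0 := hx
    rw [hdec' l x, hx', add_zero, inner_sub_left, Complex.sub_re, hre]
    have := (hb0 l).re_inner_nonneg_left x
    simp at this
    linarith
  · intro l x hx
    have hbx : b l x = 0 := by
      have h1 : b l (b l x) ∈ LinearMap.ker (a l : G →ₗ[ℂ] G) := habx l _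
      have h2 := (Submodule.mem_orthogonal _ _).1 hx _ h1
      rw [← inner_self_eq_zero (𝕜 := ℂ), ← h2]
      exact ((hb0 l).isSymmetric _ _).symm
    rw [hdec' l x, hbx, sub_zero, inner_add_left, Complex.add_re, hre]
    have := (ha0 l).re_inner_nonneg_left x
    simp at this
    linarith

/-- Orthogonal decomposition adapted to an embedding. -/
theorem aux_decomp (j : G →L[ℂ] H) (hinj : Function.Injective j) (hj : ∀ x, ‖j x‖ ≤ ‖x‖) :
    ∃ E : ℕ → Submodule ℂ G,
      (∀ k l, k ≠ l → ∀ x ∈ E k, ∀ y ∈ E l, ⟪x, y⟫_ℂ = 0) ∧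
      (∀ k, ∀ x ∈ E k, (j.adjoint (j x)) ∈ E k) ∧
      (∀ k, ∀ x ∈ E k, ‖j x‖ ^ 2 ≤ (1 / 4 : ℝ) ^ k * ‖x‖ ^ 2) ∧
      (∀ k, ∀ x ∈ E k, (1 / 4 : ℝ) ^ (k + 1) * ‖x‖ ^ 2 ≤ ‖j x‖ ^ 2) ∧
      (∀ x, (∀ k, ∀ y ∈ E k, ⟪y, x⟫_ℂ = 0) → x = 0) := by
  set S : G →L[ℂ] G := j.adjoint ∘L j with hSdef
  have hSpos : S.IsPositive := ContinuousLinearMap.isPositive_adjoint_comp_self j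
  have hSS : ∀ x, (⟪S x, x⟫_ℂ).re = ‖j x‖ ^ 2 := fun x => by
    rw [hSdef, ContinuousLinearMap.comp_apply, ContinuousLinearMap.adjoint_inner_left,
      inner_self_eq_norm_sq_to_K]
    simp [← Complex.ofReal_pow]
  obtain ⟨M0, hcl, hmono, hinv, hle, hge⟩ := aux_spec S hSpos.isSelfAdjoint
  set M : ℕ → Submodule ℂ G := fun k => if k = 0 then ⊤ else M0 ((1 / 4 : ℝ) ^ k) with hM
  have hM0 : M 0 = ⊤ := by simp [hM]
  have hMs : ∀ k, M (k + 1) = M0 ((1 / 4 : ℝ) ^ (k + 1)) := fun k => by simp [hM]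
  have hanti : Antitone M := by
    apply antitone_nat_of_succ_le
    intro k
    rcases k with _ | k
    · rw [hM0]; exact le_top
    · rw [hMs, hMs]
      apply hmono
      exact pow_lt_pow_right_of_lt_one₀ (by norm_num) (by norm_num) (by omega)
  have hMinv : ∀ k, ∀ x ∈ M k, S x ∈ M k := by
    intro k
    rcases k with _ | k
    · rw [hM0]; simp
    · rw [hMs]; exact hinv _
  have hMoinv : ∀ k, ∀ x ∈ (M k)ᗮ, S x ∈ (M k)ᗮ := by
    intro k x hx
    rw [Submodule.mem_orthogonal] at hx ⊢
    intro u hu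
    rw [← hx (S u) (hMinv k u hu)]
    exact (hSpos.isSymmetric u x).symm
  have hMle : ∀ k, ∀ x ∈ M k, ‖j x‖ ^ 2 ≤ (1 / 4 : ℝ) ^ k * ‖x‖ ^ 2 := by
    intro k x hx
    rcases k with _ | k
    · have := hj x
      rw [pow_zero, one_mul]
      gcongr
    · rw [hMs] at hx
      rw [← hSS]
      exact hle _ x hx
  have hproj : ∀ k, (M (k + 1)).HasOrthogonalProjection := by
    intro k
    rw [hMs]
    have : CompleteSpace (M0 ((1 / 4 : ℝ) ^ (k + 1))) := (hcl _).completeSpace_coe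
    infer_instance
  have hlt : ∀ k l, k < l → ∀ x ∈ M k ⊓ (M (k + 1))ᗮ, ∀ y ∈ M l ⊓ (M (l + 1))ᗮ, ⟪y, x⟫_ℂ = 0 := by
    intro k l hkl x hx y hy
    exact (Submodule.mem_orthogonal _ _).1 hx.2 y (hanti hkl hy.1)
  refine ⟨fun k => M k ⊓ (M (k + 1))ᗮ, ?_, ?_, ?_, ?_, ?_⟩
  · intro k l hkl x hx y hy
    rcases lt_or_gt_of_ne hkl with h | h
    · rw [inner_eq_zero_symm]; exact hlt k l h x hx y hy
    · exact hlt l k h y hy x hx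
  · intro k x hx
    exact ⟨hMinv k x hx.1, hMoinv _ x hx.2⟩
  · intro k x hx
    exact hMle k x hx.1
  · intro k x hx
    have := hx.2
    rw [hMs] at this
    rw [← hSS]
    exact hge _ x this
  · intro x hx
    have hall : ∀ k, x ∈ M k := by
      intro k
      induction k with
      | zero => rw [hM0]; trivial
      | succ k ih =>
        have := hproj k
        have hu : (M (k + 1)).starProjection x ∈ M (k + 1) :=
          Submodule.starProjection_apply_mem _ _
        have hv : x - (M (k + 1)).starProjection x ∈ (M (k + 1))ᗮ :=
          Submodule.sub_starProjection_mem_orthogonal x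
        have h1 := hx k _ ⟨(M k).sub_mem ih (hanti (Nat.le_succ k) hu), hv⟩
        have h2 := (Submodule.mem_orthogonal' _ _).1 hv _ hu
        have h3 : x - (M (k + 1)).starProjection x = 0 := by
          rw [← inner_self_eq_zero (𝕜 := ℂ), inner_sub_right, h1, h2, sub_zero]
        rw [sub_eq_zero.1 h3]
        exact hu
    have hlim : Filter.Tendsto (fun k : ℕ => (1 / 4 : ℝ) ^ k * ‖x‖ ^ 2) Filter.atTop (nhds 0) := by
      simpa using (tendsto_pow_atTop_nhds_zero_of_lt_one (by norm_num : (0 : ℝ) ≤ 1 / 4)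
        (by norm_num)).mul_const (‖x‖ ^ 2)
    have h0 : ‖j x‖ ^ 2 ≤ 0 := ge_of_tendsto' hlim fun k => hMle k x (hall k)
    have : j x = 0 := by
      rw [← norm_eq_zero]
      exact pow_eq_zero_iff (two_ne_zero) |>.1 (le_antisymm h0 (by positivity))
    exact hinj (by rw [this, map_zero])

theorem aux_core [TopologicalSpace.SeparableSpace G] (j : G →L[ℂ] H)
    (hinj : Function.Injective j) (hj : ∀ x, ‖j x‖ ≤ ‖x‖) :
    ∃ W : ℕ → Submodule ℂ G, (∀ n, FiniteDimensional ℂ (W n)) ∧ Monotone W ∧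
      (⨆ n, W n).topologicalClosure = ⊤ ∧
      ∀ n, ∀ x, ∀ y ∈ W n, (∀ z ∈ W n, ⟪j z, j x - j y⟫_ℂ = 0) → ‖y‖ ≤ 4 * ‖x‖ := by
  obtain ⟨E, horth, hinv, hle, hge, htot⟩ := aux_decomp j hinj hj
  have hor : OrthogonalFamily ℂ (fun k => E k) (fun k => (E k).subtypeₗᵢ) := by
    intro k l hkl x y
    exact horth k l hkl x x.2 y y.2
  set d : ∀ k, ℕ → E k := fun k => TopologicalSpace.denseSeq (E k) with hd
  set Wk : ℕ → ℕ → Submodule ℂ G :=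
    fun n k => Submodule.span ℂ ((fun i => (d k i : G)) '' Set.Iio n) with hWk
  have hWkE : ∀ n k, Wk n k ≤ E k := by
    intro n k
    rw [hWk, Submodule.span_le]
    rintro _ ⟨i, _, rfl⟩
    exact (d k i).2
  have hWkfin : ∀ n k, FiniteDimensional ℂ (Wk n k) := fun n k =>
    FiniteDimensional.span_of_finite ℂ ((Set.finite_Iio n).image _)
  refine ⟨fun n => ⨆ k ∈ Finset.range n, Wk n k, ?_, ?_, ?_, ?_⟩
  · intro n
    have h := Submodule.finiteDimensional_finset_sup (K := ℂ) (Finset.range n) (Wk n)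
    rwa [Finset.sup_eq_iSup] at h
  · intro m n hmn
    refine iSup₂_le fun k hk => ?_
    have h1 : Wk m k ≤ Wk n k :=
      Submodule.span_mono (Set.image_mono (Set.Iio_subset_Iio hmn))
    refine h1.trans (le_iSup₂_of_le k ?_ le_rfl)
    simp at hk ⊢
    omega
  · rw [Submodule.topologicalClosure_eq_top_iff, Submodule.eq_bot_iff]
    intro x hx
    rw [Submodule.mem_orthogonal] at hx
    apply htot
    have h1 : ∀ k i, ⟪(d k i : G), x⟫_ℂ = 0 := by
      intro k i
      apply hx
      refine Submodule.mem_iSup_of_mem (max k i + 1) ?_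
      refine Submodule.mem_iSup_of_mem k (Submodule.mem_iSup_of_mem ?_ ?_)
      · simp
      · exact Submodule.subset_span ⟨i, by simp, rfl⟩
    intro k y hy
    have hc : IsClosed {y : E k | ⟪(y : G), x⟫_ℂ = 0} :=
      isClosed_eq (by fun_prop) continuous_const
    have hdn : Dense {y : E k | ⟪(y : G), x⟫_ℂ = 0} :=
      (TopologicalSpace.denseRange_denseSeq (E k)).mono (by rintro _ ⟨i, rfl⟩; exact h1 k i)
    have := hc.closure_eq ▸ hdn ⟨y, hy⟩
    exact this
  · intro n x y hy horx
    obtain ⟨μ, hμ⟩ := (Submodule.mem_iSup_finset_iff_exists_sum _ _).1 hy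
    set s := Finset.range n
    set S : G → G := fun x => j.adjoint (j x) with hS
    have hμE : ∀ k, (μ k : G) ∈ E k := fun k => hWkE n k (μ k).2
    have hpyth : ∀ v : ℕ → G, (∀ k, v k ∈ E k) → ‖∑ k ∈ s, v k‖ ^ 2 = ∑ k ∈ s, ‖v k‖ ^ 2 := by
      intro v hv
      simpa using hor.norm_sum (fun k => ⟨v k, hv k⟩) s
    have hy2 : ‖y‖ ^ 2 = ∑ k ∈ s, ‖(μ k : G)‖ ^ 2 := by rw [← hμ]; exact hpyth _ hμE
    -- inner products of the pieces
    have hin : ∀ k ∈ s, ⟪j (μ k : G), j x⟫_ℂ = (‖j (μ k : G)‖ ^ 2 : ℝ) := by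
      intro k hk
      have hmem : (μ k : G) ∈ ⨆ k ∈ s, Wk n k :=
        Submodule.mem_iSup_of_mem k (Submodule.mem_iSup_of_mem hk (μ k).2)
      have h0 := horx _ hmem
      rw [inner_sub_right, sub_eq_zero] at h0
      rw [h0, ← hμ, map_sum, inner_sum, Finset.sum_eq_single k]
      · rw [inner_self_eq_norm_sq_to_K]; simp
      · intro l _ hlk
        rw [← ContinuousLinearMap.adjoint_inner_left]
        exact horth k l (Ne.symm hlk) _ (hinv k _ (hμE k)) _ (hμE l)
      · intro h; exact absurd hk h
    set w : ℕ → G := fun k => ((4 : ℝ) ^ (k + 1) : ℂ) • S (μ k : G) with hw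
    have hwE : ∀ k, w k ∈ E k := fun k => (E k).smul_mem _ (hinv k _ (hμE k))
    have hSn : ∀ k, ‖S (μ k : G)‖ ≤ (1 / 4 : ℝ) ^ k * ‖(μ k : G)‖ := by
      intro k
      set c : ℝ := (1 / 4 : ℝ) ^ k with hc
      have hc0 : 0 < c := by positivity
      have h1 : ‖S (μ k : G)‖ ^ 2 ≤ ‖j (μ k : G)‖ * ‖j (S (μ k : G))‖ := by
        have : ⟪S (μ k : G), S (μ k : G)⟫_ℂ = ⟪j (μ k : G), j (S (μ k : G))⟫_ℂ :=
          ContinuousLinearMap.adjoint_inner_left j _ _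
        calc ‖S (μ k : G)‖ ^ 2 = ‖⟪S (μ k : G), S (μ k : G)⟫_ℂ‖ := by
              rw [inner_self_eq_norm_sq_to_K]; simp
          _ ≤ _ := by rw [this]; exact norm_inner_le_norm _ _
      have h2 := hle k _ (hμE k)
      have h3 := hle k _ (hinv k _ (hμE k))
      change ‖j (S (μ k : G))‖ ^ 2 ≤ c * ‖S (μ k : G)‖ ^ 2 at h3
      rw [← hc] at h2
      have h4 : ‖j (μ k : G)‖ * ‖j (S (μ k : G))‖ ≤ c * (‖(μ k : G)‖ * ‖S (μ k : G)‖) := by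
        apply le_of_sq_le_sq _ (by positivity)
        calc _ = ‖j (μ k : G)‖ ^ 2 * ‖j (S (μ k : G))‖ ^ 2 := by ring
          _ ≤ (c * ‖(μ k : G)‖ ^ 2) * (c * ‖S (μ k : G)‖ ^ 2) := by gcongr
          _ = _ := by ring
      rcases (norm_nonneg (S (μ k : G))).eq_or_lt with h | h
      · rw [← h]; positivity
      · have : ‖S (μ k : G)‖ * ‖S (μ k : G)‖ ≤ (c * ‖(μ k : G)‖) * ‖S (μ k : G)‖ := by
          nlinarith
        exact le_of_mul_le_mul_right this h
    have hwn : ∀ k, ‖w k‖ ^ 2 ≤ 16 * ‖(μ k : G)‖ ^ 2 := by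
      intro k
      have h1 : ‖w k‖ ≤ 4 * ‖(μ k : G)‖ := by
        calc ‖w k‖ = 4 ^ (k + 1) * ‖S (μ k : G)‖ := by rw [hw]; simp [norm_smul]
          _ ≤ 4 ^ (k + 1) * ((1 / 4 : ℝ) ^ k * ‖(μ k : G)‖) := by gcongr; exact hSn k
          _ = 4 * ((4 * (1 / 4 : ℝ)) ^ k * ‖(μ k : G)‖) := by rw [mul_pow]; ring
          _ = _ := by norm_num
      calc ‖w k‖ ^ 2 ≤ (4 * ‖(μ k : G)‖) ^ 2 := by gcongr
        _ = _ := by ring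
    have hwsum : ‖∑ k ∈ s, w k‖ ≤ 4 * ‖y‖ := by
      apply le_of_sq_le_sq _ (by positivity)
      rw [hpyth w hwE, mul_pow, hy2, Finset.mul_sum]
      exact Finset.sum_le_sum fun k _ => by have := hwn k; linarith
    have hkey : ‖y‖ ^ 2 ≤ 4 * ‖y‖ * ‖x‖ := by
      have hinw : ⟪∑ k ∈ s, w k, x⟫_ℂ = ((∑ k ∈ s, 4 ^ (k + 1) * ‖j (μ k : G)‖ ^ 2 : ℝ) : ℂ) := by
        rw [sum_inner, Complex.ofReal_sum]
        refine Finset.sum_congr rfl fun k hk => ?_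
        rw [hw, hS]
        dsimp only
        rw [inner_smul_left, ContinuousLinearMap.adjoint_inner_left, hin k hk, map_pow, Complex.conj_ofReal]
        push_cast
        ring
      calc ‖y‖ ^ 2 ≤ ∑ k ∈ s, 4 ^ (k + 1) * ‖j (μ k : G)‖ ^ 2 := by
            rw [hy2]
            refine Finset.sum_le_sum fun k _ => ?_
            have := hge k _ (hμE k)
            calc ‖(μ k : G)‖ ^ 2 = (4 * (1 / 4 : ℝ)) ^ (k + 1) * ‖(μ k : G)‖ ^ 2 := by norm_num
              _ = 4 ^ (k + 1) * ((1 / 4 : ℝ) ^ (k + 1) * ‖(μ k : G)‖ ^ 2) := by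
                rw [mul_pow]; ring
              _ ≤ _ := by gcongr
        _ ≤ ‖⟪∑ k ∈ s, w k, x⟫_ℂ‖ := by
            rw [hinw, Complex.norm_real]; exact le_abs_self _
        _ ≤ ‖∑ k ∈ s, w k‖ * ‖x‖ := norm_inner_le_norm _ _
        _ ≤ _ := by gcongr
    rcases (norm_nonneg y).eq_or_lt with h | h
    · rw [← h]; positivity
    · have : ‖y‖ * ‖y‖ ≤ (4 * ‖x‖) * ‖y‖ := by nlinarith
      exact le_of_mul_le_mul_right this h

theorem aux_conv [TopologicalSpace.SeparableSpace G] (j : G →L[ℂ] H)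
    (hinj : Function.Injective j) (hj : ∀ x, ‖j x‖ ≤ ‖x‖) (hdr : DenseRange j) :
    ∃ P : ℕ → H →L[ℂ] H, (∀ n, IsSelfAdjoint (P n)) ∧ (∀ n, IsIdempotentElem (P n)) ∧
      (∀ n, ‖P n‖ ≤ 1) ∧
      (∀ n, FiniteDimensional ℂ (LinearMap.range ((P n : H →ₗ[ℂ] H)))) ∧
      (∀ n h, ∃ y, j y = P n h) ∧
      (∀ f, Filter.Tendsto (fun n => P n f) Filter.atTop (nhds f)) ∧
      (∀ x, ∀ y : ℕ → G, (∀ n, j (y n) = P n (j x)) →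
        Filter.Tendsto y Filter.atTop (nhds x)) := by
  obtain ⟨W, hfin, hmono, hdense, hbd⟩ := aux_core j hinj hj
  set V : ℕ → Submodule ℂ H := fun n => (W n).map (j : G →ₗ[ℂ] H) with hV
  have hVfin : ∀ n, FiniteDimensional ℂ (V n) := fun n => by rw [hV]; infer_instance
  have hVm : Monotone V := fun m n h => Submodule.map_mono (hmono h)
  have hVd : (⨆ n, V n).topologicalClosure = ⊤ := by
    rw [Submodule.topologicalClosure_eq_top_iff, Submodule.eq_bot_iff]
    intro h hh
    rw [Submodule.mem_orthogonal] at hh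
    have h1 : j.adjoint h ∈ (⨆ n, W n)ᗮ := by
      rw [Submodule.mem_orthogonal]
      intro u hu
      rw [ContinuousLinearMap.adjoint_inner_right]
      apply hh
      rw [hV, ← Submodule.map_iSup]
      exact ⟨u, hu, rfl⟩
    rw [Submodule.topologicalClosure_eq_top_iff.1 hdense, Submodule.mem_bot] at h1
    refine Dense.eq_zero_of_inner_right ℂ hdr ?_
    rintro _ ⟨u, rfl⟩
    rw [← ContinuousLinearMap.adjoint_inner_right, h1, inner_zero_right]
  have hPV : ∀ n h, ∃ y ∈ W n, j y = (V n).starProjection h := fun n h => by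
    obtain ⟨y, hy, hy'⟩ := Submodule.starProjection_apply_mem (V n) h
    exact ⟨y, hy, hy'⟩
  refine ⟨fun n => (V n).starProjection, fun n => isSelfAdjoint_starProjection _,
    fun n => Submodule.isIdempotentElem_starProjection _,
    fun n => Submodule.starProjection_norm_le _, ?_, ?_, ?_, ?_⟩
  · intro n
    have : LinearMap.range ((V n).starProjection : H →ₗ[ℂ] H) ≤ V n := by
      rintro _ ⟨x, rfl⟩
      exact Submodule.starProjection_apply_mem _ _
    exact Submodule.finiteDimensional_of_le this
  · intro n h
    obtain ⟨y, _, hy⟩ := hPV n h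
    exact ⟨y, hy⟩
  · intro f
    exact Submodule.starProjection_tendsto_self V hVm f hVd.ge
  · intro x y hy
    have hbound : ∀ n x y, j y = (V n).starProjection (j x) → ‖y‖ ≤ 4 * ‖x‖ := by
      intro n x y hxy
      obtain ⟨y', hy'W, hy'⟩ := hPV n (j x)
      have : y = y' := hinj (hxy.trans hy'.symm)
      subst this
      refine hbd n x y hy'W fun z hz => ?_
      rw [hxy]
      exact (Submodule.mem_orthogonal _ _).1 (Submodule.sub_starProjection_mem_orthogonal (j x))
        _ ⟨z, hz, rfl⟩
    rw [Metric.tendsto_atTop]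
    intro ε hε
    have hxc : x ∈ closure ((⨆ n, W n : Submodule ℂ G) : Set G) := by
      rw [← Submodule.topologicalClosure_coe, hdense]; trivial
    obtain ⟨u, hu, hxu⟩ := Metric.mem_closure_iff.1 hxc (ε / 5) (by positivity)
    obtain ⟨N, hN⟩ := (Submodule.mem_iSup_of_directed W hmono.directed_le).1 hu
    refine ⟨N, fun n hn => ?_⟩
    have hju : (V n).starProjection (j u) = j u :=
      Submodule.starProjection_eq_self_iff.2 ⟨u, hmono hn hN, rfl⟩
    have h1 := hbound n (x - u) (y n - u) (by rw [map_sub, map_sub, map_sub, hy n, hju])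
    rw [dist_eq_norm] at hxu ⊢
    calc ‖y n - x‖ = ‖(y n - u) - (x - u)‖ := by congr 1; abel
      _ ≤ ‖y n - u‖ + ‖x - u‖ := norm_sub_le _ _
      _ < ε := by linarith

end aux

/-- For a self-adjoint operator `A` on a separable Hilbert space there is a sequence of
finite rank orthogonal projections `P n` with `P n → I` strongly, `Ran P n ⊆ Dom A`, and
`P n A P n f → A f` for every `f ∈ Dom A`. -/
theorem exists_finiteRank_projections
    {E : Type*} [NormedAddCommGroup E] [InnerProductSpace ℂ E] [CompleteSpace E]
    [TopologicalSpace.SeparableSpace E]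
    (A : E →ₗ.[ℂ] E) (hA : IsSelfAdjoint A) :
    ∃ P : ℕ → E →L[ℂ] E,
      (∀ n, IsSelfAdjoint (P n)) ∧ (∀ n, IsIdempotentElem (P n)) ∧
      (∀ n, FiniteDimensional ℂ (LinearMap.range ((P n : E →ₗ[ℂ] E)))) ∧
      ∃ hmem : ∀ (n : ℕ) (x : E), P n x ∈ A.domain,
        (∀ f : E, Filter.Tendsto (fun n => P n f) Filter.atTop (nhds f)) ∧
        (∀ f : A.domain,
          Filter.Tendsto (fun n => P n (A ⟨P n (f : E), hmem n (f : E)⟩))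
            Filter.atTop (nhds (A f))) := by
  -- the graph of `A` as a Hilbert space
  let G : Submodule ℂ (WithLp 2 (E × E)) :=
    A.graph.comap (WithLp.linearEquiv 2 ℂ (E × E)).toLinearMap
  have hGcl : IsClosed (G : Set (WithLp 2 (E × E))) :=
    IsClosed.preimage (WithLp.prod_continuous_ofLp 2 E E) hA.isClosed
  have hGc : CompleteSpace G := hGcl.completeSpace_coe
  have hGs : TopologicalSpace.SeparableSpace G := inferInstance
  let j : G →L[ℂ] E := (WithLp.fstL 2 ℂ E E) ∘L G.subtypeL
  let q : G →L[ℂ] E := (WithLp.sndL 2 ℂ E E) ∘L G.subtypeL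
  have hG : ∀ x : G, ∃ h : j x ∈ A.domain, A ⟨j x, h⟩ = q x := by
    intro x
    obtain ⟨y, hy1, hy2⟩ := (LinearPMap.mem_graph_iff A).1 x.2
    have h : j x ∈ A.domain := by
      have : (y : E) = j x := hy1
      rw [← this]; exact y.2
    refine ⟨h, ?_⟩
    have : y = ⟨j x, h⟩ := Subtype.ext hy1
    rw [← this]
    exact hy2
  have hmk : ∀ f : A.domain, ∃ x : G, j x = f ∧ q x = A f := by
    intro f
    refine ⟨⟨WithLp.toLp 2 ((f : E), A f), ?_⟩, rfl, rfl⟩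
    exact LinearPMap.mem_graph A f
  have hinj : Function.Injective j := by
    intro x y hxy
    obtain ⟨h1, h2⟩ := hG x
    obtain ⟨h3, h4⟩ := hG y
    have hq : q x = q y := by
      rw [← h2, ← h4]
      congr 1
      exact Subtype.ext hxy
    apply Subtype.ext
    apply WithLp.ofLp_injective
    exact Prod.ext hxy hq
  have hj : ∀ x, ‖j x‖ ≤ ‖x‖ := by
    intro x
    exact WithLp.norm_fst_le E (x : WithLp 2 (E × E))
  have hdr : DenseRange j := by
    refine hA.dense_domain.mono ?_
    intro f hf
    obtain ⟨x, hx, _⟩ := hmk ⟨f, hf⟩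
    exact ⟨x, hx⟩
  obtain ⟨P, hsa, hid, hn, hfin, hran, htend, hgr⟩ := aux_conv j hinj hj hdr
  refine ⟨P, hsa, hid, hfin, ?_, htend, ?_⟩
  · intro n x
    obtain ⟨y, hy⟩ := hran n x
    rw [← hy]
    exact (hG y).1
  · intro f
    obtain ⟨x, hx1, hx2⟩ := hmk f
    choose y hy using fun n => hran n (j x)
    have hy' := (q.continuous.tendsto x).comp (hgr x y hy)
    have hAq : ∀ n h, A ⟨P n (f : E), h⟩ = q (y n) := by
      intro n h
      obtain ⟨h1, h2⟩ := hG (y n)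
      rw [← h2]
      congr 1
      apply Subtype.ext
      change P n (f : E) = j (y n)
      rw [hy n, hx1]
    simp only [hAq]
    rw [← hx2]
    have hlim1 : Filter.Tendsto (fun n => P n (q (y n) - q x)) Filter.atTop (nhds 0) := by
      have h0 : Filter.Tendsto (fun n => ‖q (y n) - q x‖) Filter.atTop (nhds 0) :=
        tendsto_iff_norm_sub_tendsto_zero.1 hy'
      refine squeeze_zero_norm (fun n => ?_) h0
      exact ((P n).le_of_opNorm_le (hn n) _).trans (by rw [one_mul])
    have := hlim1.add (htend (q x))
    simpa using this
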